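/- arXiv:math/9605231 — 5 statements merged into one kernel-verified Lean document; each statement's English description precedes it below -/
import Mathlib

section
/- In ℝ⁵ with the standard Euclidean inner product, let S be the set of three vectors (-2/3,4/3,-2/3,-1/2,1/2), (-2/3,1/3,1/3,-1/2,1/2), (-2/3,-2/3,4/3,-1/2,1/2). Then the minimum of ‖x‖² over x in the convex hull of S equals 7/6, and it is attained at the point β₂ = (-2/3,1/3,1/3,-1/2,1/2). -/
/-- A vector in `ℝ⁵` with the standard Euclidean inner product. -/
noncomputable def vec5 (a b c d e : ℝ) : EuclideanSpace ℝ (Fin 5) :=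
  (WithLp.equiv 2 (Fin 5 → ℝ)).symm ![a, b, c, d, e]

/-- Table (2.3) for `(GL(3)×GL(2), Sym²k³⊗k²)`: the minimum of `‖x‖²` over the
convex hull of the listed weight vectors equals `7/6`, attained at
`β₂ = ((-2/3) (1/3) (1/3) (-1/2) (1/2))`. -/
theorem minsq_of_convexHull_weights :
    let S : Set (EuclideanSpace ℝ (Fin 5)) :=
      {vec5 (-2/3) (4/3) (-2/3) (-1/2) (1/2),
       vec5 (-2/3) (1/3) (1/3) (-1/2) (1/2),
       vec5 (-2/3) (-2/3) (4/3) (-1/2) (1/2)}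
    let β : EuclideanSpace ℝ (Fin 5) := vec5 (-2/3) (1/3) (1/3) (-1/2) (1/2)
    β ∈ convexHull ℝ S ∧ ‖β‖ ^ 2 = 7/6 ∧
      ∀ x ∈ convexHull ℝ S, (7/6 : ℝ) ≤ ‖x‖ ^ 2 := by
  intro S β
  refine ⟨subset_convexHull ℝ S (by simp [S, β]), ?_, ?_⟩
  · rw [EuclideanSpace.real_norm_sq_eq]
    simp [β, vec5, Fin.sum_univ_succ]
    norm_num
  · intro x hx
    have hsub : convexHull ℝ S ⊆ {x : EuclideanSpace ℝ (Fin 5) |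
        x 0 = -2/3 ∧ x 1 + x 2 = 2/3 ∧ x 3 = -1/2 ∧ x 4 = 1/2} := by
      apply convexHull_min
      · rintro y (rfl | rfl | rfl) <;> simp [vec5] <;> norm_num
      · rintro y ⟨h0, h1, h3, h4⟩ z ⟨k0, k1, k3, k4⟩ a b _ _ hab
        obtain rfl : b = 1 - a := by linarith
        simp only [Set.mem_setOf_eq, PiLp.add_apply, PiLp.smul_apply, smul_eq_mul]
        refine ⟨?_, ?_, ?_, ?_⟩
        · rw [h0, k0]; ring
        · linear_combination a * h1 + (1 - a) * k1
        · rw [h3, k3]; ring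
        · rw [h4, k4]; ring
    obtain ⟨h0, h1, h3, h4⟩ := hsub hx
    rw [EuclideanSpace.real_norm_sq_eq, Fin.sum_univ_five, h0, h3, h4]
    nlinarith [sq_nonneg (x 1 - x 2), congrArg (fun t => t ^ 2) h1]
end

section
/- Let q(x,y) = ax² + bxy + cy² be a nonzero binary quadratic form with complex coefficients, identified with its coefficient vector (a,b,c) ∈ ℂ³. Let SL(2,ℂ) act on such forms by (g·q)(x,y) = q((x,y)g) (linear substitution of variables). Then the following are equivalent: (i) 0 ∈ ℂ³ lies in the topological closure of the orbit {g·q : g ∈ SL(2,ℂ)} in ℂ³; (ii) b² − 4ac = 0; (iii) q = ℓ² for some linear form ℓ(x,y) = dx + ey with d, e ∈ ℂ. -/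
/-- The binary quadratic form with coefficient vector `(a, b, c) : Fin 3 → ℂ`. -/
def quadForm (a : Fin 3 → ℂ) (x y : ℂ) : ℂ :=
  a 0 * x ^ 2 + a 1 * x * y + a 2 * y ^ 2

/-- For a nonzero binary quadratic form `q = ax² + bxy + cy²` over `ℂ` with the
`SL(2,ℂ)`-action `(g·q)(x,y) = q((x,y)g)`, the following are equivalent:
(i) `0` lies in the closure of the orbit of `q`; (ii) `b² − 4ac = 0`;
(iii) `q` is the square of a linear form. -/
theorem binary_quadratic_null_cone (a : Fin 3 → ℂ) (ha : a ≠ 0) :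
    ((0 : Fin 3 → ℂ) ∈ closure {b : Fin 3 → ℂ |
        ∃ g : Matrix.SpecialLinearGroup (Fin 2) ℂ, ∀ x y : ℂ,
          quadForm b x y =
            quadForm a (x * (g : Matrix (Fin 2) (Fin 2) ℂ) 0 0 +
                         y * (g : Matrix (Fin 2) (Fin 2) ℂ) 1 0)
                       (x * (g : Matrix (Fin 2) (Fin 2) ℂ) 0 1 +
                         y * (g : Matrix (Fin 2) (Fin 2) ℂ) 1 1)} ↔
      a 1 ^ 2 - 4 * a 0 * a 2 = 0) ∧
    (a 1 ^ 2 - 4 * a 0 * a 2 = 0 ↔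
      ∃ d e : ℂ, ∀ x y : ℂ, quadForm a x y = (d * x + e * y) ^ 2) := by
  have h23 : a 1 ^ 2 - 4 * a 0 * a 2 = 0 →
      ∃ d e : ℂ, ∀ x y : ℂ, quadForm a x y = (d * x + e * y) ^ 2 := by
    intro h
    by_cases h0 : a 0 = 0
    · have h1 : a 1 = 0 := by
        rw [h0] at h
        simpa using h
      obtain ⟨e, he⟩ := IsAlgClosed.exists_pow_nat_eq (a 2) (n := 2) (by norm_num)
      refine ⟨0, e, fun x y => ?_⟩
      simp only [quadForm, h0, h1, ← he]
      ring
    · obtain ⟨d, hd⟩ := IsAlgClosed.exists_pow_nat_eq (a 0) (n := 2) (by norm_num)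
      have hd0 : d ≠ 0 := by
        rintro rfl
        apply h0
        rw [← hd]
        ring
      have h1 : a 1 = 2 * d * (a 1 / (2 * d)) := by
        field_simp
      have h2 : a 2 = (a 1 / (2 * d)) ^ 2 := by
        field_simp
        rw [← hd] at h
        linear_combination -h
      refine ⟨d, a 1 / (2 * d), fun x y => ?_⟩
      simp only [quadForm]
      rw [← hd]
      linear_combination (x * y) * h1 + y ^ 2 * h2
  have coeffs : ∀ p q r : ℂ, ∀ b : Fin 3 → ℂ,
      (∀ x y : ℂ, quadForm b x y = p * x ^ 2 + q * x * y + r * y ^ 2) →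
      b 0 = p ∧ b 1 = q ∧ b 2 = r := by
    intro p q r b h
    have e1 := h 1 0
    have e2 := h 0 1
    have e3 := h 1 1
    simp only [quadForm] at e1 e2 e3
    refine ⟨by linear_combination e1, by linear_combination e3 - e1 - e2,
      by linear_combination e2⟩
  refine ⟨⟨fun h => ?_, fun h => ?_⟩, h23, ?_⟩
  · have hcl : IsClosed {b : Fin 3 → ℂ |
        b 1 ^ 2 - 4 * b 0 * b 2 = a 1 ^ 2 - 4 * a 0 * a 2} :=
      isClosed_eq (by fun_prop) continuous_const
    have hm := closure_minimal (t := {b : Fin 3 → ℂ |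
        b 1 ^ 2 - 4 * b 0 * b 2 = a 1 ^ 2 - 4 * a 0 * a 2}) ?_ hcl h
    · simpa using hm.symm
    · rintro b ⟨g, hg⟩
      have hdet := g.det_coe
      rw [Matrix.det_fin_two] at hdet
      generalize (g : Matrix (Fin 2) (Fin 2) ℂ) 0 0 = s at *
      generalize (g : Matrix (Fin 2) (Fin 2) ℂ) 0 1 = t at *
      generalize (g : Matrix (Fin 2) (Fin 2) ℂ) 1 0 = u at *
      generalize (g : Matrix (Fin 2) (Fin 2) ℂ) 1 1 = v at *
      obtain ⟨h0, h1, h2⟩ := coeffs (a 0 * s ^ 2 + a 1 * s * t + a 2 * t ^ 2)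
        (2 * a 0 * s * u + a 1 * (s * v + t * u) + 2 * a 2 * t * v)
        (a 0 * u ^ 2 + a 1 * u * v + a 2 * v ^ 2) b (fun x y => by
          rw [hg]; simp only [quadForm]; ring)
      simp only [Set.mem_setOf_eq]
      rw [h0, h1, h2]
      linear_combination (a 1 ^ 2 - 4 * a 0 * a 2) * (s * v - t * u + 1) * hdet
  · obtain ⟨d, e, hde⟩ := h23 h
    have hne : d ≠ 0 ∨ e ≠ 0 := by
      by_contra! hc
      obtain ⟨rfl, rfl⟩ := hc
      obtain ⟨h0, h1, h2⟩ := coeffs 0 0 0 a (fun x y => by rw [hde]; ring)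
      apply ha
      ext i
      fin_cases i <;> assumption
    have hpq : ∃ p q : ℂ, d * p + e * q = 1 := by
      rcases hne with h | h
      · exact ⟨d⁻¹, 0, by field_simp; ring⟩
      · exact ⟨0, e⁻¹, by field_simp; ring⟩
    obtain ⟨p, q, hpq⟩ := hpq
    have hlim : Filter.Tendsto (fun t : ℂ => (![t ^ 2, 0, 0] : Fin 3 → ℂ))
        (nhdsWithin 0 {0}ᶜ) (nhds 0) := by
      have hc : Continuous (fun t : ℂ => (![t ^ 2, 0, 0] : Fin 3 → ℂ)) := by
        refine continuous_pi fun i => ?_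
        fin_cases i <;> simp <;> fun_prop
      have := hc.tendsto 0
      have h0 : (![(0 : ℂ) ^ 2, 0, 0] : Fin 3 → ℂ) = 0 := by
        ext i
        fin_cases i <;> simp
      rw [h0] at this
      exact this.mono_left nhdsWithin_le_nhds
    refine mem_closure_of_tendsto hlim ?_
    filter_upwards [self_mem_nhdsWithin] with t ht
    have ht : t ≠ 0 := ht
    refine ⟨⟨!![t * p, t * q; -e / t, d / t], ?_⟩, fun x y => ?_⟩
    · rw [Matrix.det_fin_two_of]
      field_simp
      linear_combination hpq
    · rw [hde]
      simp [quadForm]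
      have : d * (x * (t * p) + y * (-e / t)) + e * (x * (t * q) + y * (d / t)) = t * x := by
        field_simp
        linear_combination t ^ 2 * x * hpq
      rw [this]
      ring
  · rintro ⟨d, e, h⟩
    obtain ⟨h0, h1, h2⟩ := coeffs (d ^ 2) (2 * d * e) (e ^ 2) a (fun x y => by rw [h]; ring)
    rw [h0, h1, h2]
    ring
end

section
/- Let n ≥ 1 and let A be a nonzero symmetric n×n matrix over ℂ. Then 0 lies in the topological closure (in the space of n×n complex matrices) of the set {gᵀ A g : g ∈ SL(n,ℂ)} if and only if det A = 0. -/
open Matrix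

/-- A nonzero symmetric `n×n` complex matrix `A` has `0` in the closure of
`{gᵀ A g : g ∈ SL(n,ℂ)}` if and only if `det A = 0`. -/
theorem symmetric_matrix_null_cone (n : ℕ) (hn : 1 ≤ n)
    (A : Matrix (Fin n) (Fin n) ℂ) (hA : A.IsSymm) (hA0 : A ≠ 0) :
    (0 : Matrix (Fin n) (Fin n) ℂ) ∈
        closure {B : Matrix (Fin n) (Fin n) ℂ |
          ∃ g : Matrix.SpecialLinearGroup (Fin n) ℂ,
            B = (g : Matrix (Fin n) (Fin n) ℂ)ᵀ * A * (g : Matrix (Fin n) (Fin n) ℂ)} ↔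
      A.det = 0 := by
  constructor
  · intro h
    have hcl : IsClosed {B : Matrix (Fin n) (Fin n) ℂ | B.det = A.det} :=
      isClosed_eq (continuous_id.matrix_det) continuous_const
    have h2 := closure_minimal (t := {B : Matrix (Fin n) (Fin n) ℂ | B.det = A.det}) (by
      rintro B ⟨g, rfl⟩
      simp [Matrix.det_mul, Matrix.det_transpose]) hcl h
    have h3 : (0 : Matrix (Fin n) (Fin n) ℂ).det = A.det := h2
    rw [← h3]
    have : Nonempty (Fin n) := ⟨⟨0, hn⟩⟩
    exact Matrix.det_zero
  · intro h
    obtain ⟨v, hv, hAv⟩ := Matrix.exists_mulVec_eq_zero_iff.mpr h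
    obtain ⟨i, hi⟩ := Function.ne_iff.mp hv
    have hi' : v i ≠ 0 := hi
    let w : Fin n → ℂ := Pi.single i (v i)⁻¹
    have hwv : w ⬝ᵥ v = 1 := by simp [w, hi']
    have ht : Filter.Tendsto (fun t : ℂ => (t ^ 2) • A) (nhdsWithin 0 {0}ᶜ) (nhds 0) := by
      have : Continuous (fun t : ℂ => (t ^ 2) • A) := by fun_prop
      have h4 := this.tendsto 0
      simp only [ne_eq, OfNat.ofNat_ne_zero, not_false_eq_true, zero_pow, zero_smul] at h4
      exact h4.mono_left nhdsWithin_le_nhds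
    refine mem_closure_of_tendsto ht ?_
    filter_upwards [self_mem_nhdsWithin] with t ht0
    have ht0 : t ≠ 0 := ht0
    let M : Matrix (Fin n) (Fin n) ℂ := t • (1 + vecMulVec (((t ^ n)⁻¹ - 1) • v) w)
    have hAM : A * M = t • A := by
      simp [M, mul_add, Matrix.mul_vecMulVec, Matrix.mulVec_smul, hAv]
    have hMA : Mᵀ * A = t • A := by
      have := congrArg Matrix.transpose hAM
      rwa [Matrix.transpose_mul, Matrix.transpose_smul t A, hA.eq] at this
    have hdet : M.det = 1 := by
      simp only [M, Matrix.det_smul, Fintype.card_fin]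
      rw [Matrix.vecMulVec_eq Unit, Matrix.det_one_add_replicateCol_mul_replicateRow,
        dotProduct_smul, hwv]
      simp [ht0]
    refine ⟨⟨M, hdet⟩, ?_⟩
    change _ = Mᵀ * A * M
    rw [hMA, Matrix.smul_mul, hAM, smul_smul, pow_two]
end

section
/- Let p be a prime, let μ be the additive Haar measure on ℚ_p normalized so that μ(ℤ_p) = 1, and let s, s₁ be real numbers with s > 0 and s + s₁ > 1. Then (1 − p^{−1})^{−1} · ∫_{ℚ_p × ℚ_p} 1_{ℤ_p}(t) · 1_{ℤ_p}(t·u) · ‖t‖^{s−1} · (max(1, ‖u‖))^{−s₁} d(μ×μ)(t,u) = (1 − p^{−(s+s₁)}) / ((1 − p^{−s}) · (1 − p^{−(s+s₁−1)})), where ‖·‖ denotes the p-adic absolute value. -/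
open MeasureTheory

section helpers
variable {p : ℕ} [Fact p.Prime]

lemma aux_pone : (1 : ℝ) < p := by exact_mod_cast (Fact.out : p.Prime).one_lt

lemma aux_digit (x : ℚ_[p]) (hx : ‖x‖ ≤ 1) : ∃ i ∈ Finset.range p, ‖x - (i : ℚ_[p])‖ < 1 := by
  obtain ⟨y, rfl⟩ : ∃ y : ℤ_[p], (y : ℚ_[p]) = x := ⟨⟨x, hx⟩, rfl⟩
  obtain ⟨i, hi, h⟩ := PadicInt.exists_mem_range (p := p) y
  refine ⟨i, Finset.mem_range.2 hi, ?_⟩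
  have := PadicInt.mem_nonunits.1 ((IsLocalRing.mem_maximalIdeal _).1 h)
  rw [PadicInt.norm_def, PadicInt.coe_sub, PadicInt.coe_natCast] at this
  exact this

lemma aux_digit_inj {i j : ℕ} (hi : i < p) (hj : j < p) (h : ‖(i : ℚ_[p]) - j‖ < 1) : i = j := by
  have h1 : ‖(((i : ℤ) - (j : ℤ) : ℤ) : ℚ_[p])‖ < 1 := by push_cast; exact h
  rw [Padic.norm_intCast_lt_one_iff] at h1
  have := Int.eq_zero_of_abs_lt_dvd h1 (by rw [abs_lt]; constructor <;> omega)
  omega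

lemma aux_ball_step [MeasurableSpace ℚ_[p]] [BorelSpace ℚ_[p]]
    (μ : Measure ℚ_[p]) [μ.IsAddHaarMeasure] (n : ℤ) :
    μ {x : ℚ_[p] | ‖x‖ ≤ (p : ℝ) ^ (n + 1)} = p * μ {x : ℚ_[p] | ‖x‖ ≤ (p : ℝ) ^ n} := by
  have hp0 : (p : ℝ) ≠ 0 := by have := aux_pone (p := p); positivity
  have hpp : (0 : ℝ) < p := by have := aux_pone (p := p); positivity
  have hpQ : (p : ℚ_[p]) ≠ 0 := by exact_mod_cast (Fact.out : p.Prime).ne_zero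
  let c : ℚ_[p] := (p : ℚ_[p]) ^ (-(n + 1))
  have hc : ‖c‖ = (p : ℝ) ^ (n + 1) := by simp only [c]; rw [Padic.norm_p_zpow, neg_neg]
  have hc0 : c ≠ 0 := zpow_ne_zero _ hpQ
  have key (x : ℚ_[p]) (i : ℕ) : ‖-((i : ℚ_[p]) * c) + x‖ ≤ (p : ℝ) ^ n ↔ ‖x / c - i‖ < 1 := by
    rw [Padic.norm_le_pow_iff_norm_lt_pow_add_one, ← hc,
      show -((i : ℚ_[p]) * c) + x = (x / c - i) * c by field_simp; ring, norm_mul]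
    exact mul_lt_iff_lt_one_left (norm_pos_iff.2 hc0)
  have hU : {x : ℚ_[p] | ‖x‖ ≤ (p : ℝ) ^ (n + 1)} =
      ⋃ i ∈ Finset.range p, (fun x => -((i : ℚ_[p]) * c) + x) ⁻¹' {x : ℚ_[p] | ‖x‖ ≤ (p : ℝ) ^ n} := by
    ext x
    simp only [Set.mem_iUnion, Set.mem_preimage, Set.mem_ofPred_eq, key, exists_prop]
    have h1 : ‖x‖ ≤ (p : ℝ) ^ (n + 1) ↔ ‖x / c‖ ≤ 1 := by
      rw [norm_div, hc, div_le_one (zpow_pos hpp _)]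
    rw [h1]
    refine ⟨aux_digit _, ?_⟩
    rintro ⟨i, -, h⟩
    calc ‖x / c‖ = ‖(x / c - i) + (i : ℤ)‖ := by simp
      _ ≤ _ := Padic.nonarchimedean _ _
      _ ≤ 1 := max_le h.le (Padic.norm_int_le_one _)
  have hm : MeasurableSet {x : ℚ_[p] | ‖x‖ ≤ (p : ℝ) ^ n} :=
    measurableSet_le measurable_norm measurable_const
  rw [hU, measure_biUnion_finset]
  · simp only [measure_preimage_add]
    simp
  · intro i hi j hj hij
    refine Set.disjoint_left.2 fun x hx hy => hij ?_
    simp only [Set.mem_preimage, Set.mem_ofPred_eq, key] at hx hy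
    refine aux_digit_inj (Finset.mem_range.1 hi) (Finset.mem_range.1 hj) ?_
    calc ‖(i : ℚ_[p]) - j‖ = ‖(x / c - j) + -(x / c - i)‖ := by congr 1; ring
      _ ≤ _ := Padic.nonarchimedean _ _
      _ < 1 := by rw [norm_neg]; exact max_lt hy hx
  · intro i _
    exact hm.preimage (measurable_const_add _)

lemma aux_ball [MeasurableSpace ℚ_[p]] [BorelSpace ℚ_[p]]
    (μ : Measure ℚ_[p]) [μ.IsAddHaarMeasure] (hμ : μ {x : ℚ_[p] | ‖x‖ ≤ 1} = 1) (n : ℤ) :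
    μ {x : ℚ_[p] | ‖x‖ ≤ (p : ℝ) ^ n} = ENNReal.ofReal ((p : ℝ) ^ n) := by
  have hpp : (0 : ℝ) < p := by have := aux_pone (p := p); positivity
  have hpe : (p : ENNReal) = ENNReal.ofReal p := by simp
  induction n using Int.induction_on with
  | zero => simpa using hμ
  | succ n ih =>
    rw [aux_ball_step, ih, hpe, ← ENNReal.ofReal_mul hpp.le, zpow_add_one₀ hpp.ne', mul_comm]
  | pred n ih =>
    have h := aux_ball_step μ (-(n : ℤ) - 1)
    rw [sub_add_cancel, ih] at h
    have h2 : ENNReal.ofReal ((p : ℝ) ^ (-(n : ℤ))) =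
        p * ENNReal.ofReal ((p : ℝ) ^ (-(n : ℤ) - 1)) := by
      rw [hpe, ← ENNReal.ofReal_mul hpp.le, ← zpow_one_add₀ hpp.ne']
      congr 2; ring
    rw [h2] at h
    exact ((ENNReal.mul_right_inj (by simp [(Fact.out : p.Prime).ne_zero]) (by simp)).1 h).symm

lemma aux_sphere [MeasurableSpace ℚ_[p]] [BorelSpace ℚ_[p]]
    (μ : Measure ℚ_[p]) [μ.IsAddHaarMeasure] (hμ : μ {x : ℚ_[p] | ‖x‖ ≤ 1} = 1) (n : ℤ) :
    μ {x : ℚ_[p] | ‖x‖ = (p : ℝ) ^ n} = ENNReal.ofReal ((p : ℝ) ^ n * (1 - (p : ℝ)⁻¹)) := by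
  have hpp : (0 : ℝ) < p := by have := aux_pone (p := p); positivity
  have h : {x : ℚ_[p] | ‖x‖ = (p : ℝ) ^ n} =
      {x : ℚ_[p] | ‖x‖ ≤ (p : ℝ) ^ n} \ {x : ℚ_[p] | ‖x‖ ≤ (p : ℝ) ^ (n - 1)} := by
    ext x
    simp only [Set.mem_sdiff, Set.mem_ofPred_eq, ← Padic.norm_lt_pow_iff_norm_le_pow_sub_one, not_lt]
    exact ⟨fun h => ⟨h.le, h.ge⟩, fun h => le_antisymm h.1 h.2⟩
  have hle : (p : ℝ) ^ (n - 1) ≤ (p : ℝ) ^ n := zpow_le_zpow_right₀ aux_pone.le (by omega)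
  have hm : MeasurableSet {x : ℚ_[p] | ‖x‖ ≤ (p : ℝ) ^ (n - 1)} :=
    measurableSet_le measurable_norm measurable_const
  have hsub : {x : ℚ_[p] | ‖x‖ ≤ (p : ℝ) ^ (n - 1)} ⊆ {x : ℚ_[p] | ‖x‖ ≤ (p : ℝ) ^ n} :=
    fun x hx => le_trans hx hle
  rw [h, measure_sdiff hsub hm.nullMeasurableSet
    (by rw [aux_ball μ hμ]; simp), aux_ball μ hμ, aux_ball μ hμ,
    ← ENNReal.ofReal_sub _ (by positivity), zpow_sub_one₀ hpp.ne']
  congr 1; ring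

/-- integral of a radial function over a sequence of spheres -/
lemma aux_spheres [MeasurableSpace ℚ_[p]] [BorelSpace ℚ_[p]]
    (μ : Measure ℚ_[p]) [μ.IsAddHaarMeasure] (hμ : μ {x : ℚ_[p] | ‖x‖ ≤ 1} = 1)
    (e : ℕ → ℤ) (he : Function.Injective e) (f : ℝ → ℝ) (C r : ℝ) (hC : 0 ≤ C) (hr : 0 ≤ r)
    (hr1 : r < 1)
    (hf0 : ∀ k, 0 ≤ f ((p : ℝ) ^ e k))
    (hf : ∀ k, f ((p : ℝ) ^ e k) * (p : ℝ) ^ e k = C * r ^ k) :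
    ∫⁻ x in ⋃ k, {x : ℚ_[p] | ‖x‖ = (p : ℝ) ^ e k}, ENNReal.ofReal (f ‖x‖) ∂μ =
      ENNReal.ofReal ((1 - (p : ℝ)⁻¹) * (C * (1 - r)⁻¹)) := by
  have hp1 := aux_pone (p := p)
  have hq : 0 ≤ 1 - (p : ℝ)⁻¹ := sub_nonneg.2 (inv_le_one_of_one_le₀ hp1.le)
  have hm (k : ℕ) : MeasurableSet {x : ℚ_[p] | ‖x‖ = (p : ℝ) ^ e k} :=
    measurableSet_eq_fun measurable_norm measurable_const
  rw [lintegral_iUnion hm]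
  · have (k : ℕ) : ∫⁻ x in {x : ℚ_[p] | ‖x‖ = (p : ℝ) ^ e k}, ENNReal.ofReal (f ‖x‖) ∂μ =
        ENNReal.ofReal ((1 - (p : ℝ)⁻¹) * (C * r ^ k)) := by
      rw [setLIntegral_congr_fun (g := fun _ => ENNReal.ofReal (f ((p : ℝ) ^ e k))) (hm k)
        (fun x hx => by simp only [Set.mem_ofPred_eq] at hx; simp only [hx])]
      rw [setLIntegral_const, aux_sphere μ hμ, ← ENNReal.ofReal_mul (hf0 k), ← hf]
      congr 1; ring
    simp_rw [this]
    have hs := ((hasSum_geometric_of_lt_one hr hr1).mul_left C).mul_left (1 - (p : ℝ)⁻¹)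
    rw [← ENNReal.ofReal_tsum_of_nonneg (fun k => by positivity) hs.summable, hs.tsum_eq]
  · intro i j hij
    refine Set.disjoint_left.2 fun x hx hy => hij ?_
    simp only [Set.mem_ofPred_eq] at hx hy
    exact he (zpow_right_injective₀ (by linarith) hp1.ne' (hx.symm.trans hy))

lemma aux_exists (x : ℚ_[p]) (hx : x ≠ 0) : ∃ n : ℤ, ‖x‖ = (p : ℝ) ^ n :=
  ⟨_, Padic.norm_eq_zpow_neg_valuation hx⟩

lemma aux_inner [MeasurableSpace ℚ_[p]] [BorelSpace ℚ_[p]]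
    (μ : Measure ℚ_[p]) [μ.IsAddHaarMeasure] (hμ : μ {x : ℚ_[p] | ‖x‖ ≤ 1} = 1)
    (s : ℝ) (hs : 0 < s) (n : ℤ) :
    ∫⁻ x in {x : ℚ_[p] | ‖x‖ ≤ (p : ℝ) ^ n}, ENNReal.ofReal (‖x‖ ^ (s - 1)) ∂μ =
      ENNReal.ofReal ((1 - (p : ℝ)⁻¹) * (((p : ℝ) ^ n) ^ s * (1 - (p : ℝ) ^ (-s))⁻¹)) := by
  have hp1 := aux_pone (p := p)
  have hpp : (0 : ℝ) < p := by linarith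
  have hae : ({x : ℚ_[p] | ‖x‖ ≤ (p : ℝ) ^ n} : Set ℚ_[p]) =ᵐ[μ]
      ⋃ k : ℕ, {x : ℚ_[p] | ‖x‖ = (p : ℝ) ^ (n - k : ℤ)} := by
    have h0 : ∀ᵐ x ∂μ, x ≠ 0 := by simp [ae_iff]
    filter_upwards [h0] with x hx
    obtain ⟨m, hm⟩ := aux_exists x hx
    refine propext ?_
    change ‖x‖ ≤ (p : ℝ) ^ n ↔ x ∈ ⋃ k : ℕ, {x : ℚ_[p] | ‖x‖ = (p : ℝ) ^ (n - k : ℤ)}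
    simp only [Set.mem_iUnion, Set.mem_ofPred_eq, hm, zpow_le_zpow_iff_right₀ hp1,
      zpow_right_inj₀ hpp hp1.ne']
    constructor
    · intro h; exact ⟨(n - m).toNat, by omega⟩
    · rintro ⟨k, hk⟩; omega
  rw [setLIntegral_congr hae]
  refine aux_spheres μ hμ (fun k : ℕ => n - k) (fun a b h => by simpa using h)
    (fun y => y ^ (s - 1)) _ _ (by positivity) (by positivity) ?_ (fun k => by positivity) ?_
  · exact Real.rpow_lt_one_of_one_lt_of_neg hp1 (by linarith)
  · intro k
    have h1 : (0 : ℝ) < (p : ℝ) ^ (n - k : ℤ) := by positivity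
    rw [← Real.rpow_add_one h1.ne', ← Real.rpow_intCast, ← Real.rpow_intCast, ← Real.rpow_natCast,
      ← Real.rpow_mul hpp.le, ← Real.rpow_mul hpp.le, ← Real.rpow_mul hpp.le, ← Real.rpow_add hpp]
    congr 1; push_cast; ring

lemma aux_outer [MeasurableSpace ℚ_[p]] [BorelSpace ℚ_[p]]
    (μ : Measure ℚ_[p]) [μ.IsAddHaarMeasure] (hμ : μ {x : ℚ_[p] | ‖x‖ ≤ 1} = 1)
    (w : ℝ) (hw : 1 < w) :
    ∫⁻ x, ENNReal.ofReal ((max 1 ‖x‖) ^ (-w)) ∂μ =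
      ENNReal.ofReal (1 + (1 - (p : ℝ)⁻¹) *
        ((p : ℝ) ^ (-(w - 1)) * (1 - (p : ℝ) ^ (-(w - 1)))⁻¹)) := by
  have hp1 := aux_pone (p := p)
  have hpp : (0 : ℝ) < p := by linarith
  have hq : 0 ≤ 1 - (p : ℝ)⁻¹ := sub_nonneg.2 (inv_le_one_of_one_le₀ hp1.le)
  have hlt : (p : ℝ) ^ (-(w - 1)) < 1 := Real.rpow_lt_one_of_one_lt_of_neg hp1 (by linarith)
  have hm : MeasurableSet {x : ℚ_[p] | ‖x‖ ≤ 1} :=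
    measurableSet_le measurable_norm measurable_const
  have hU : {x : ℚ_[p] | ‖x‖ ≤ 1}ᶜ = ⋃ k : ℕ, {x : ℚ_[p] | ‖x‖ = (p : ℝ) ^ (k + 1 : ℤ)} := by
    ext x
    simp only [Set.mem_compl_iff, Set.mem_ofPred_eq, Set.mem_iUnion, not_le]
    by_cases hx : x = 0
    · subst hx
      simp only [norm_zero]
      constructor
      · intro h; linarith
      · rintro ⟨k, hk⟩
        have : (0 : ℝ) < (p : ℝ) ^ (k + 1 : ℤ) := by positivity
        linarith
    obtain ⟨m, hm⟩ := aux_exists x hx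
    rw [hm, one_lt_zpow_iff_right₀ hp1]
    simp only [zpow_right_inj₀ hpp hp1.ne']
    constructor
    · intro h; exact ⟨(m - 1).toNat, by omega⟩
    · rintro ⟨k, hk⟩; omega
  rw [← lintegral_add_compl _ hm, hU, aux_spheres μ hμ (fun k : ℕ => k + 1)
    (fun a b h => by simpa using h)
    (fun y => (max 1 y) ^ (-w)) ((p : ℝ) ^ (-(w - 1))) ((p : ℝ) ^ (-(w - 1)))
      (by positivity) (by positivity) hlt (fun k => by positivity) ?_,
    setLIntegral_congr_fun (g := fun _ => 1) hm (fun x hx => by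
      simp only [Set.mem_ofPred_eq] at hx; simp [max_eq_left hx]), setLIntegral_const, hμ,
    ENNReal.ofReal_add zero_le_one]
  · simp
  · have : 0 ≤ 1 - (p : ℝ) ^ (-(w - 1)) := by linarith
    positivity
  · intro k
    have h1 : (0 : ℝ) < (p : ℝ) ^ (k + 1 : ℤ) := by positivity
    have h2 : (1 : ℝ) ≤ (p : ℝ) ^ (k + 1 : ℤ) := one_le_zpow₀ hp1.le (by omega)
    rw [max_eq_right h2, ← Real.rpow_add_one h1.ne', ← Real.rpow_intCast, ← Real.rpow_natCast,
      ← Real.rpow_mul hpp.le, ← Real.rpow_mul hpp.le, ← Real.rpow_add hpp]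
    congr 1; push_cast; ring

end helpers

/-- The local adjusting integral for `ℚ_p`: for the additive Haar measure `μ`
normalized by `μ(ℤ_p) = 1`, and real `s > 0`, `s + s₁ > 1`,
`(1 − p⁻¹)⁻¹ ∫ 1_{ℤ_p}(t) 1_{ℤ_p}(tu) ‖t‖^{s−1} max(1,‖u‖)^{−s₁} dμ(t)dμ(u)
  = (1 − p^{−(s+s₁)}) / ((1 − p^{−s})(1 − p^{−(s+s₁−1)}))`. -/
theorem padic_local_adjusting_integral (p : ℕ) [Fact p.Prime]
    [MeasurableSpace ℚ_[p]] [BorelSpace ℚ_[p]]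
    (μ : Measure ℚ_[p]) [μ.IsAddHaarMeasure]
    (hμ : μ {x : ℚ_[p] | ‖x‖ ≤ 1} = 1)
    (s s₁ : ℝ) (hs : 0 < s) (hss₁ : 1 < s + s₁) :
    (1 - (p : ℝ)⁻¹)⁻¹ *
      ∫ tu : ℚ_[p] × ℚ_[p],
        (if ‖tu.1‖ ≤ 1 then (1 : ℝ) else 0) *
        (if ‖tu.1 * tu.2‖ ≤ 1 then (1 : ℝ) else 0) *
        ‖tu.1‖ ^ (s - 1) * (max 1 ‖tu.2‖) ^ (-s₁) ∂(μ.prod μ) =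
      (1 - (p : ℝ) ^ (-(s + s₁))) /
        ((1 - (p : ℝ) ^ (-s)) * (1 - (p : ℝ) ^ (-(s + s₁ - 1)))) := by
  have hp1 := aux_pone (p := p)
  have hpp : (0 : ℝ) < p := by linarith
  have hq : 0 < 1 - (p : ℝ)⁻¹ := sub_pos.2 (inv_lt_one_of_one_lt₀ hp1)
  have hlt : (p : ℝ) ^ (-(s + s₁ - 1)) < 1 :=
    Real.rpow_lt_one_of_one_lt_of_neg hp1 (by linarith)
  have hlt2 : (p : ℝ) ^ (-s) < 1 := Real.rpow_lt_one_of_one_lt_of_neg hp1 (by linarith)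
  have hd1 : 0 < 1 - (p : ℝ) ^ (-(s + s₁ - 1)) := by linarith
  have hd2 : 0 < 1 - (p : ℝ) ^ (-s) := by linarith
  have hmeas : Measurable (fun tu : ℚ_[p] × ℚ_[p] =>
        (if ‖tu.1‖ ≤ 1 then (1 : ℝ) else 0) *
        (if ‖tu.1 * tu.2‖ ≤ 1 then (1 : ℝ) else 0) *
        ‖tu.1‖ ^ (s - 1) * (max 1 ‖tu.2‖) ^ (-s₁)) := by
    refine Measurable.mul (Measurable.mul (Measurable.mul ?_ ?_) ?_) ?_
    · exact Measurable.ite (measurableSet_le (by fun_prop) measurable_const) measurable_const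
        measurable_const
    · exact Measurable.ite (measurableSet_le (by fun_prop) measurable_const) measurable_const
        measurable_const
    · fun_prop
    · fun_prop
  have hinner (u : ℚ_[p]) : ∫⁻ t, ENNReal.ofReal ((if ‖t‖ ≤ 1 then (1 : ℝ) else 0) *
        (if ‖t * u‖ ≤ 1 then (1 : ℝ) else 0) * ‖t‖ ^ (s - 1) * (max 1 ‖u‖) ^ (-s₁)) ∂μ =
      ENNReal.ofReal ((1 - (p : ℝ)⁻¹) * (1 - (p : ℝ) ^ (-s))⁻¹) *
        ENNReal.ofReal ((max 1 ‖u‖) ^ (-(s + s₁))) := by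
    have hM : (0 : ℝ) < max 1 ‖u‖ := by positivity
    obtain ⟨n, hn⟩ : ∃ n : ℤ, max 1 ‖u‖ = (p : ℝ) ^ (-n) := by
      rcases le_total ‖u‖ 1 with h | h
      · exact ⟨0, by simp [h]⟩
      · obtain ⟨m, hm⟩ := aux_exists u (by rintro rfl; simp at h; linarith)
        exact ⟨-m, by rw [max_eq_right h, hm, neg_neg]⟩
    have hm : MeasurableSet {x : ℚ_[p] | ‖x‖ ≤ (p : ℝ) ^ n} :=
      measurableSet_le measurable_norm measurable_const
    have hcond (t : ℚ_[p]) : ‖t‖ ≤ (p : ℝ) ^ n ↔ ‖t‖ ≤ 1 ∧ ‖t * u‖ ≤ 1 := by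
      rw [← neg_neg n, zpow_neg, ← hn, inv_eq_one_div, le_div_iff₀ hM,
        mul_max_of_nonneg _ _ (norm_nonneg t), max_le_iff, mul_one, norm_mul]
    have heq (t : ℚ_[p]) : ENNReal.ofReal ((if ‖t‖ ≤ 1 then (1 : ℝ) else 0) *
        (if ‖t * u‖ ≤ 1 then (1 : ℝ) else 0) * ‖t‖ ^ (s - 1) * (max 1 ‖u‖) ^ (-s₁)) =
        Set.indicator {x : ℚ_[p] | ‖x‖ ≤ (p : ℝ) ^ n}
          (fun t => ENNReal.ofReal (‖t‖ ^ (s - 1))) t * ENNReal.ofReal ((max 1 ‖u‖) ^ (-s₁)) := by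
      by_cases h : ‖t‖ ≤ (p : ℝ) ^ n
      · rw [Set.indicator_of_mem (by exact h), if_pos ((hcond t).1 h).1, if_pos ((hcond t).1 h).2,
          ← ENNReal.ofReal_mul (by positivity)]
        simp
      · rw [Set.indicator_of_notMem (by exact h)]
        rw [hcond, not_and_or] at h
        rcases h with h | h <;> rw [if_neg h] <;> simp
    simp_rw [heq]
    rw [lintegral_mul_const' _ _ (by simp), lintegral_indicator hm, aux_inner μ hμ s hs,
      ← ENNReal.ofReal_mul (by positivity), ← ENNReal.ofReal_mul (by positivity)]
    congr 1
    have : ((p : ℝ) ^ n) ^ s = (max 1 ‖u‖) ^ (-s) := by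
      rw [hn, zpow_neg, Real.inv_rpow (by positivity), Real.rpow_neg (by positivity), inv_inv]
    rw [this, neg_add, Real.rpow_add hM]
    ring
  rw [integral_eq_lintegral_of_nonneg_ae (Filter.Eventually.of_forall fun tu => ?_)
    hmeas.aestronglyMeasurable, lintegral_prod_symm' _ hmeas.ennreal_ofReal]
  · simp only [hinner]
    rw [lintegral_const_mul' _ _ (by simp), aux_outer μ hμ _ hss₁,
      ← ENNReal.ofReal_mul (by positivity), ENNReal.toReal_ofReal (by positivity)]
    have : (p : ℝ) ^ (-(s + s₁)) = (p : ℝ) ^ (-(s + s₁ - 1)) * (p : ℝ)⁻¹ := by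
      rw [← Real.rpow_neg_one, ← Real.rpow_add hpp]; congr 1; ring
    rw [this]
    generalize (p : ℝ) ^ (-(s + s₁ - 1)) = x at *
    generalize (p : ℝ) ^ (-s) = y at *
    generalize (p : ℝ)⁻¹ = z at *
    field_simp
    ring
  · simp only [Pi.zero_apply]
    positivity
end

section
/- Let n, N ≥ 1, let γ₁, …, γ_N ∈ ℤⁿ, and let the torus (ℂ^×)ⁿ act on ℂ^N by (t • x)_i = (∏_{j=1}^n t_j^{γ_i(j)}) · x_i. Let x ∈ ℂ^N with x ≠ 0. Then 0 lies in the topological closure of the orbit {t • x : t ∈ (ℂ^×)ⁿ} in ℂ^N if and only if the origin of ℝⁿ does NOT belong to the convex hull (in ℝⁿ) of the finite set {γ_i : x_i ≠ 0}. -/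
lemma torus_norm_aux {n : ℕ} (t : Fin n → ℂˣ) (g : Fin n → ℤ) :
    ‖((∏ j : Fin n, t j ^ g j : ℂˣ) : ℂ)‖
      = Real.exp (∑ j, (g j : ℝ) * Real.log ‖(t j : ℂ)‖) := by
  rw [Real.exp_sum, Units.coe_prod, norm_prod]
  refine Finset.prod_congr rfl fun j _ => ?_
  have h : 0 < ‖(t j : ℂ)‖ := norm_pos_iff.2 (t j).ne_zero
  rw [Units.val_zpow_eq_zpow_val, norm_zpow, mul_comm, ← Real.rpow_def_of_pos h,
    Real.rpow_intCast]

/-- Torus instability criterion: for the action of `(ℂ^×)ⁿ` on `ℂ^N` with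
integer weights `γ₁, …, γ_N`, a nonzero point `x` has `0` in the closure of its
torus orbit iff the origin is *not* in the convex hull of the weights `γ_i`
with `x_i ≠ 0`. -/
theorem torus_instability (n N : ℕ) (hn : 1 ≤ n) (hN : 1 ≤ N)
    (γ : Fin N → Fin n → ℤ) (x : Fin N → ℂ) (hx : x ≠ 0) :
    (0 : Fin N → ℂ) ∈ closure {y : Fin N → ℂ |
        ∃ t : Fin n → ℂˣ, y = fun i => ((∏ j : Fin n, t j ^ γ i j : ℂˣ) : ℂ) * x i} ↔
      (0 : Fin n → ℝ) ∉
        convexHull ℝ ((fun i => fun j => (γ i j : ℝ)) '' {i : Fin N | x i ≠ 0}) := by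
  constructor
  · intro hcl hhull
    obtain ⟨m, hm, hmx⟩ : ∃ m : ℝ, 0 < m ∧ ∀ i, x i ≠ 0 → m ≤ ‖x i‖ := by
      obtain ⟨k, hk⟩ := Function.ne_iff.1 hx
      obtain ⟨i₀, hi₀, hmin⟩ := Finset.exists_min_image
        (Finset.univ.filter fun i => x i ≠ 0) (fun i => ‖x i‖)
        ⟨k, by simpa using hk⟩
      refine ⟨‖x i₀‖, norm_pos_iff.2 (by simpa using hi₀), fun i hi => hmin i (by simpa using hi)⟩
    obtain ⟨y, ⟨t, rfl⟩, hy⟩ := Metric.mem_closure_iff.1 hcl m hm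
    rw [dist_zero_left] at hy
    let L : (Fin n → ℝ) →ₗ[ℝ] ℝ :=
      ∑ j, Real.log ‖(t j : ℂ)‖ • LinearMap.proj (R := ℝ) (φ := fun _ : Fin n => ℝ) j
    have hL : ∀ v, L v = ∑ j, v j * Real.log ‖(t j : ℂ)‖ := by
      intro v
      simp [L, LinearMap.sum_apply, mul_comm]
    have hsub : convexHull ℝ ((fun i => fun j => (γ i j : ℝ)) '' {i : Fin N | x i ≠ 0})
        ⊆ {v | L v < 0} := by
      refine convexHull_min ?_ (convex_halfSpace_lt L.isLinear 0)
      rintro _ ⟨i, hi, rfl⟩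
      change L _ < 0
      rw [hL]
      by_contra hneg
      have h1 := (norm_le_pi_norm _ i).trans_lt hy
      rw [norm_mul, torus_norm_aux] at h1
      have h2 := Real.one_le_exp (not_lt.1 hneg)
      have h3 := hmx i hi
      nlinarith
    have h0 := hsub hhull
    simp at h0
  · intro hhull
    obtain ⟨f, u, hu, hf⟩ := geometric_hahn_banach_point_closed (convex_convexHull ℝ _)
      (((Set.toFinite {i : Fin N | x i ≠ 0}).image
        (fun i => fun j => (γ i j : ℝ))).isClosed_convexHull ℝ) hhull
    rw [map_zero] at hu
    have hfe : ∀ v : Fin n → ℝ, f v = ∑ j, v j * f (Pi.single j 1) := by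
      intro v
      conv_lhs => rw [pi_eq_sum_univ' v]
      simp [map_sum]
    let T : ℝ → Fin n → ℂˣ := fun s j =>
      Units.mk0 (Complex.exp ((-(s * f (Pi.single j 1)) : ℝ) : ℂ)) (Complex.exp_ne_zero _)
    refine mem_closure_of_tendsto (b := Filter.atTop)
      (f := fun s : ℝ => fun i => ((∏ j : Fin n, T s j ^ γ i j : ℂˣ) : ℂ) * x i) ?_
      (Filter.Eventually.of_forall fun s => ⟨T s, rfl⟩)
    rw [tendsto_pi_nhds]
    intro i
    by_cases hi : x i = 0
    · simp [hi]
    have hpos : 0 < f (fun j => (γ i j : ℝ)) :=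
      hu.trans (hf _ (subset_convexHull ℝ _ ⟨i, hi, rfl⟩))
    rw [Pi.zero_apply, tendsto_zero_iff_norm_tendsto_zero]
    have key : ∀ s : ℝ, ‖((∏ j : Fin n, T s j ^ γ i j : ℂˣ) : ℂ) * x i‖
        = Real.exp (-(s * f (fun j => (γ i j : ℝ)))) * ‖x i‖ := by
      intro s
      rw [norm_mul, torus_norm_aux, hfe (fun j => (γ i j : ℝ)), Finset.mul_sum,
        ← Finset.sum_neg_distrib]
      congr 2
      refine Finset.sum_congr rfl fun j _ => ?_
      simp only [T, Units.val_mk0, Complex.norm_exp_ofReal, Real.log_exp]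
      ring
    simp only [key]
    have h1 : Filter.Tendsto (fun s : ℝ => s * f (fun j => (γ i j : ℝ)))
        Filter.atTop Filter.atTop := Filter.tendsto_id.atTop_mul_const hpos
    simpa using (Real.tendsto_exp_neg_atTop_nhds_zero.comp h1).mul_const ‖x i‖
end
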